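/- arXiv:1403.5871 — 3 statements merged into one kernel-verified Lean document; each statement's English description precedes it below -/
import Mathlib

section
/- Assume NS ⊆ T (Restriction 1: all liars are Sybil), the noise-free assumption (R ⊆ T implies gen(R) = NS), that every receiver set containing a liar generates a false view (R ∩ L ≠ ∅ implies gen(R) ≠ NS), Condition 1 (for every R ⊆ I, gen(R) ∩ C ≠ ∅), and that C ≠ ∅. Then exactly one view-consistent view is generated across all receiver sets, and it is the true view: there exists R ⊆ I with gen(R) = NS and gen(R) view-consistent, and for every receiver set R ⊆ I, if gen(R) is view-consistent then gen(R) = NS. -/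
section Views

variable {β : Type*} {gen : β → β} {I V T W : β}

/-- View-consistency of `W`: every receiver set contained in `W` generates the view `W`.
Receiver sets and views are the elements of one type `β` whose order is inclusion, so that sets of
identities may be finite or infinite, and the empty receiver set may be admitted or excluded. -/
def IsViewConsistent [LE β] (gen : β → β) (W : β) : Prop :=
  ∀ Q, Q ≤ W → gen Q = W

theorem isViewConsistent_of_noiseFree [Preorder β] (hVT : V ≤ T)
    (hNoiseFree : ∀ R ≤ T, gen R = V) : IsViewConsistent gen V :=
  fun Q hQV => hNoiseFree Q (hQV.trans hVT)

theorem IsViewConsistent.eq_of_exists_le [LE β] (hW : IsViewConsistent gen W)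
    (hNoiseFree : ∀ R ≤ T, gen R = V) (hWT : ∃ Q ≤ W, Q ≤ T) : W = V := by
  obtain ⟨Q, hQW, hQT⟩ := hWT
  exact (hW Q hQW).symm.trans (hNoiseFree Q hQT)

theorem unique_consistent_view_is_true_view_general [Preorder β]
    (hVI : V ≤ I) (hVT : V ≤ T) (hNoiseFree : ∀ R ≤ T, gen R = V)
    (hTruthful : ∀ R ≤ I, ∃ Q ≤ gen R, Q ≤ T) :
    (∃ R ≤ I, gen R = V ∧ IsViewConsistent gen (gen R)) ∧
      ∀ R ≤ I, IsViewConsistent gen (gen R) → gen R = V := by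
  have hgenV : gen V = V := hNoiseFree V hVT
  refine ⟨⟨V, hVI, hgenV, ?_⟩, fun R hRI hR => hR.eq_of_exists_le hNoiseFree (hTruthful R hRI)⟩
  rw [hgenV]
  exact isViewConsistent_of_noiseFree hVT hNoiseFree

end Views

theorem exists_singleton_subset_of_inter_nonempty {α : Type*} [DecidableEq α] {s t : Finset α}
    (h : (s ∩ t).Nonempty) : ∃ a, {a} ⊆ s ∧ {a} ⊆ t := by
  simpa only [Finset.Nonempty, Finset.mem_inter, Finset.singleton_subset_iff] using h

/-- Theorem: under Restriction 1 (`NS ⊆ T`), the noise-free assumption,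
Condition 1, the fact that lying receiver sets generate false views, and
`C ≠ ∅`, exactly one view-consistent view is generated across all receiver
sets, and it is the true view `NS`. -/
theorem unique_consistent_view_is_true_view
    {α : Type*} [DecidableEq α]
    (I NS T : Finset α) (hNS : NS ⊆ I) (hT : T ⊆ I)
    (gen : Finset α → Finset α)
    (hRestrict1 : NS ⊆ T)
    (hNoiseFree : ∀ R : Finset α, R ⊆ T → gen R = NS)
    (hLiarFalse : ∀ R : Finset α, R ⊆ I → (R ∩ (I \ T)).Nonempty → gen R ≠ NS)
    (hCond1 : ∀ R : Finset α, R ⊆ I → (gen R ∩ (NS ∩ T)).Nonempty)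
    (hC : (NS ∩ T).Nonempty) :
    (∃ R : Finset α, R ⊆ I ∧ gen R = NS ∧
      (∀ Q : Finset α, Q ⊆ gen R → gen Q = gen R)) ∧
    (∀ R : Finset α, R ⊆ I →
      (∀ Q : Finset α, Q ⊆ gen R → gen Q = gen R) → gen R = NS) := by
  refine unique_consistent_view_is_true_view_general hNS hRestrict1 hNoiseFree fun R hR => ?_
  -- A single conforming identity in the view, used as a receiver set, generates the true view.
  obtain ⟨c, hcView, hcConforming⟩ := exists_singleton_subset_of_inter_nonempty (hCond1 R hR)
  exact ⟨{c}, hcView, hcConforming.trans Finset.inter_subset_right⟩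
end

section
/- Let NS be a finite nonempty set, let 0 < γ < 1/2, and let V¹ and V² be two views satisfying V¹ ⊆ NS and V² ⊆ NS (no Sybil identities are accepted) and misclassifying strictly fewer than a γ fraction of the non-Sybil identities: |NS \ V¹| < γ·|NS| and |NS \ V²| < γ·|NS|. Then |V¹ ∩ V²| > (1 − 2γ)·|NS|, |V¹ \ V²| < γ·|NS|, and |V² \ V¹| < γ·|NS|; consequently γ·|V¹ ∩ V²| > (1 − 2γ)·|V¹ \ V²| and γ·|V¹ ∩ V²| > (1 − 2γ)·|V² \ V¹|, i.e., V¹ and V² are γ-similar. -/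
/-!
A view `A` that misses fewer than `γ |S|` elements of `S` has `|A| > (1 - γ) |S|`, and if `A ⊆ S`,
then `A \ B` lies in `S \ B`, so `|A \ B| < γ |S|` for every view `B` that misses as few. Since
`γ |A ∩ B| - (1 - 2γ) |A \ B| = γ |A| - (1 - γ) |A \ B|`, comparing both terms on the right with
`γ (1 - γ) |S|` gives similarity for all `γ ≤ 1`.
-/

section TruthfulViews

variable {α R : Type*} [DecidableEq α] [CommRing R] [LinearOrder R] {γ : R} {S A B : Finset α}

/-- Two views are `γ`-similar when `|A ∩ B| / |A \ B|` and `|A ∩ B| / |B \ A|` both exceed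
`(1 - 2γ) / γ`. The ratios are cross-multiplied, so that they also make sense for nested views. -/
def GammaSimilar (γ : R) (A B : Finset α) : Prop :=
  (1 - 2 * γ) * ((A \ B).card : R) < γ * ((A ∩ B).card : R) ∧
    (1 - 2 * γ) * ((B \ A).card : R) < γ * ((A ∩ B).card : R)

theorem card_le_card_inter_add_card_sdiff_add_card_sdiff (S A B : Finset α) :
    S.card ≤ (A ∩ B).card + ((S \ A).card + (S \ B).card) :=
  calc
    S.card ≤ (S \ (A ∩ B)).card + (A ∩ B).card := Finset.card_le_card_sdiff_add_card
    _ = (A ∩ B).card + ((S \ A) ∪ (S \ B)).card := by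
      rw [Finset.sdiff_inter_distrib_right, add_comm]
    _ ≤ (A ∩ B).card + ((S \ A).card + (S \ B).card) :=
      Nat.add_le_add_left (Finset.card_union_le _ _) _

variable [IsStrictOrderedRing R]

theorem one_sub_two_mul_card_lt_card_inter (hA : ((S \ A).card : R) < γ * S.card)
    (hB : ((S \ B).card : R) < γ * S.card) :
    (1 - 2 * γ) * S.card < ((A ∩ B).card : R) := by
  have hcover : (S.card : R) ≤ (A ∩ B).card + ((S \ A).card + (S \ B).card) :=
    mod_cast card_le_card_inter_add_card_sdiff_add_card_sdiff S A B
  linarith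

theorem one_sub_mul_card_lt_card (hA : ((S \ A).card : R) < γ * S.card) :
    (1 - γ) * S.card < (A.card : R) := by
  have hcover : (S.card : R) ≤ (S \ A).card + A.card :=
    mod_cast Finset.card_le_card_sdiff_add_card
  linarith

theorem card_sdiff_lt_mul_card (hAS : A ⊆ S) (hB : ((S \ B).card : R) < γ * S.card) :
    ((A \ B).card : R) < γ * S.card :=
  lt_of_le_of_lt (mod_cast Finset.card_le_card (Finset.sdiff_subset_sdiff hAS subset_rfl)) hB

theorem one_sub_two_mul_card_sdiff_lt_mul_card_inter (hγ : γ ≤ 1) (hAS : A ⊆ S)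
    (hA : ((S \ A).card : R) < γ * S.card) (hB : ((S \ B).card : R) < γ * S.card) :
    (1 - 2 * γ) * ((A \ B).card : R) < γ * ((A ∩ B).card : R) := by
  have hγ_pos : 0 < γ :=
    pos_of_mul_pos_left ((Nat.cast_nonneg _).trans_lt hA) (Nat.cast_nonneg _)
  have hsplit : ((A \ B).card : R) + (A ∩ B).card = A.card :=
    mod_cast Finset.card_sdiff_add_card_inter A B
  have hlt : (1 - γ) * ((A \ B).card : R) < γ * A.card :=
    calc
      (1 - γ) * ((A \ B).card : R) ≤ (1 - γ) * (γ * S.card) :=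
        mul_le_mul_of_nonneg_left (card_sdiff_lt_mul_card hAS hB).le (sub_nonneg.mpr hγ)
      _ = γ * ((1 - γ) * S.card) := mul_left_comm ..
      _ < γ * A.card := mul_lt_mul_of_pos_left (one_sub_mul_card_lt_card hA) hγ_pos
  rw [← hsplit] at hlt
  linarith

theorem gammaSimilar_of_card_sdiff_lt (hγ : γ ≤ 1) (hAS : A ⊆ S) (hBS : B ⊆ S)
    (hA : ((S \ A).card : R) < γ * S.card) (hB : ((S \ B).card : R) < γ * S.card) :
    GammaSimilar γ A B :=
  ⟨one_sub_two_mul_card_sdiff_lt_mul_card_inter hγ hAS hA hB,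
    Finset.inter_comm B A ▸ one_sub_two_mul_card_sdiff_lt_mul_card_inter hγ hBS hB hA⟩

theorem truthful_views_gamma_similar_general (hγ : γ ≤ 1) (hAS : A ⊆ S) (hBS : B ⊆ S)
    (hA : ((S \ A).card : R) < γ * S.card) (hB : ((S \ B).card : R) < γ * S.card) :
    (1 - 2 * γ) * S.card < ((A ∩ B).card : R) ∧
      ((A \ B).card : R) < γ * S.card ∧
      ((B \ A).card : R) < γ * S.card ∧
      GammaSimilar γ A B :=
  ⟨one_sub_two_mul_card_lt_card_inter hA hB, card_sdiff_lt_mul_card hAS hB,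
    card_sdiff_lt_mul_card hBS hA, gammaSimilar_of_card_sdiff_lt hγ hAS hBS hA hB⟩

end TruthfulViews

/-- Lemma: two views that accept no Sybils and misclassify strictly fewer than a
`γ` fraction of the non-Sybil identities are `γ`-similar (for `0 < γ < 1/2`). -/
theorem truthful_views_gamma_similar
    {α : Type*} [DecidableEq α]
    (NS : Finset α) (hNS : NS.Nonempty)
    (γ : ℝ) (hγ0 : 0 < γ) (hγhalf : γ < 1 / 2)
    (V₁ V₂ : Finset α) (hV₁ : V₁ ⊆ NS) (hV₂ : V₂ ⊆ NS)
    (hmis₁ : ((NS \ V₁).card : ℝ) < γ * NS.card)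
    (hmis₂ : ((NS \ V₂).card : ℝ) < γ * NS.card) :
    ((1 - 2 * γ) * NS.card < ((V₁ ∩ V₂).card : ℝ)) ∧
    (((V₁ \ V₂).card : ℝ) < γ * NS.card) ∧
    (((V₂ \ V₁).card : ℝ) < γ * NS.card) ∧
    ((1 - 2 * γ) * ((V₁ \ V₂).card : ℝ) < γ * ((V₁ ∩ V₂).card : ℝ)) ∧
    ((1 - 2 * γ) * ((V₂ \ V₁).card : ℝ) < γ * ((V₁ ∩ V₂).card : ℝ)) :=
  truthful_views_gamma_similar_general (by linarith) hV₁ hV₂ hmis₁ hmis₂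
end

section
/- Let n ≥ 1 and let w : Fin (n+1) → ℝ. Let μ = (∑_{i < n} w(i)) / n be the mean of the first n coordinates and μ' = (∑_{i < n+1} w(i)) / (n+1) the mean of all n+1 coordinates. Then ∑_{i < n} (w(i) − μ)² ≤ ∑_{i < n+1} (w(i) − μ')². Consequently, the squared signalprint distance cannot decrease when an additional observer is added to a receiver set: uncorrelated RSSI vectors cannot become correlated by increasing the dimension, so adding an identity to a receiver set can change a classification only from Sybil to non-Sybil, not vice versa. -/
/-! The mean of a finite family minimizes the sum of squared deviations `c ↦ ∑ (w i - c) ^ 2`. So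
replacing the mean over the larger index set by the mean over the smaller one does not increase the
sum over the smaller set, and the terms this sum leaves out are squares. -/

open Finset

section

variable {ι K : Type*}

theorem sum_sq_sub_eq_add_card_mul_sq [CommRing K] {s : Finset ι} {w : ι → K} {m : K}
    (hm : ∑ i ∈ s, (w i - m) = 0) (c : K) :
    ∑ i ∈ s, (w i - c) ^ 2 = ∑ i ∈ s, (w i - m) ^ 2 + #s * (m - c) ^ 2 :=
  calc
    ∑ i ∈ s, (w i - c) ^ 2
      = ∑ i ∈ s, ((w i - m) ^ 2 + 2 * (m - c) * (w i - m) + (m - c) ^ 2) :=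
        sum_congr rfl fun _ _ ↦ by ring
    _ = ∑ i ∈ s, (w i - m) ^ 2 + 2 * (m - c) * ∑ i ∈ s, (w i - m) + #s * (m - c) ^ 2 := by
        simp only [sum_add_distrib, mul_sum, sum_const, nsmul_eq_mul]
    _ = ∑ i ∈ s, (w i - m) ^ 2 + #s * (m - c) ^ 2 := by rw [hm, mul_zero, add_zero]

theorem sum_sub_mean_eq_zero [DivisionRing K] [CharZero K] (s : Finset ι) (w : ι → K) :
    ∑ i ∈ s, (w i - (∑ j ∈ s, w j) / #s) = 0 := by
  rcases s.eq_empty_or_nonempty with rfl | hs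
  · exact sum_empty
  · have hcard : (#s : K) ≠ 0 := Nat.cast_ne_zero.mpr hs.card_ne_zero
    rw [sum_sub_distrib, sum_const, nsmul_eq_mul, (Nat.cast_commute _ _).eq,
      div_mul_cancel₀ _ hcard, sub_self]

variable [Field K] [LinearOrder K] [IsStrictOrderedRing K]

theorem sum_sq_sub_mean_le (s : Finset ι) (w : ι → K) (c : K) :
    ∑ i ∈ s, (w i - (∑ j ∈ s, w j) / #s) ^ 2 ≤ ∑ i ∈ s, (w i - c) ^ 2 := by
  rw [sum_sq_sub_eq_add_card_mul_sq (sum_sub_mean_eq_zero s w) c]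
  exact le_add_of_nonneg_right (by positivity)

theorem sq_deviation_sum_mono_general {s t : Finset ι} (hst : s ⊆ t) (w : ι → K) :
    ∑ i ∈ s, (w i - (∑ j ∈ s, w j) / #s) ^ 2 ≤ ∑ i ∈ t, (w i - (∑ j ∈ t, w j) / #t) ^ 2 :=
  (sum_sq_sub_mean_le s w _).trans <|
    sum_le_sum_of_subset_of_nonneg hst fun _ _ _ ↦ sq_nonneg _

end

/-- The squared signalprint distance, which equals the sum of squared deviations
of the RSSI-difference coordinates from their mean, cannot decrease when an
additional observer is appended. -/
theorem sq_deviation_sum_mono {n : ℕ} (hn : 1 ≤ n) (w : Fin (n + 1) → ℝ) :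
    (∑ i : Fin n, (w i.castSucc - (∑ j : Fin n, w j.castSucc) / n) ^ 2) ≤
      ∑ i : Fin (n + 1), (w i - (∑ j : Fin (n + 1), w j) / (n + 1)) ^ 2 := by
  simpa using sq_deviation_sum_mono_general (subset_univ (univ.map Fin.castSuccEmb)) w
end
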